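/- Let Q be a finite group such that every nontrivial normal subgroup of Q has nontrivial intersection with the commutator subgroup [Q,Q], and suppose there is no injective group homomorphism from Q into the orthogonal group O(4). Then there is no injective group homomorphism from the direct product Q × A_5 into the orthogonal group O(7), where A_5 is the alternating group on 5 letters. -/

import Mathlib

/-!
Only the Klein four-group `{1, a, b, ab}` of `A₅` and a 3-cycle `g` with `g a g⁻¹ = b`,
`g b g⁻¹ = ab` are needed. Let `V = ℝ⁷` be a faithful orthogonal representation of `Q × A₅`, with
`A`, `B` the matrices of `a`, `b`. The Klein four-group splits `V` orthogonally into its fixed space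
`V₀`, with projection `P₀ = (1 + A + B + AB)/4`, and three character spaces, permuted cyclically by
`g`, the first of which, `V₁`, has projection `P₁ = (1 + A - B - AB)/4`. All of these are
`Q`-invariant, since `Q` commutes with `A₅`, and `dim V₀ + 3 dim V₁ = 7`. An element of `Q` that is
trivial on `V₀` and `V₁` is trivial on `V`, because it commutes with `g`
(`eq_one_of_mul_one_add`).

* `dim V₁ = 0` would make `ab` act trivially, against faithfulness.
* If `dim V₁ = 1`, then `dim V₀ = 4`. As `O(1)` is commutative, `[Q,Q]` is trivial on `V₁`, so the
  kernel of `Q → O(V₀)` meets `[Q,Q]` trivially. By hypothesis this kernel is trivial, and `Q`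
  embeds into `O(4)`.
* If `dim V₁ = 2`, then `dim V₀ = 1`, and `Q` acts faithfully on `V₀ ⊕ V₁`, of dimension `3`.

Subspaces are handled through symmetric idempotent matrices `P = JᵀJ` with `JJᵀ = 1`
(`exists_factor`); the action on the range of `P` is transported to `O(m)` by
`exists_compression`.
-/

open Matrix

/-- A symmetric idempotent matrix is the orthogonal projection onto its range; the rows of `J` are
an orthonormal basis of that range, and `k` is its dimension. -/
lemma exists_factor {n : ℕ} (P : Matrix (Fin n) (Fin n) ℝ) (hs : Pᵀ = P) (hi : P * P = P) :
    ∃ (k : ℕ) (J : Matrix (Fin k) (Fin n) ℝ), Jᵀ * J = P ∧ J * Jᵀ = 1 := by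
  have hsym : P.toEuclideanLin.IsSymmetricProjection := by
    refine ⟨?_, ?_⟩
    · ext v : 1
      simp [Matrix.toLpLin_apply, hi]
    · rw [Matrix.isSymmetric_toEuclideanLin_iff, Matrix.IsHermitian,
        Matrix.conjTranspose_eq_transpose_of_trivial, hs]
  obtain ⟨S, _, hS⟩ := LinearMap.isSymmetricProjection_iff_eq_coe_starProjection.1 hsym
  let b := stdOrthonormalBasis ℝ S
  refine ⟨_, Matrix.of fun i j => (b i : EuclideanSpace ℝ (Fin n)) j, ?_, ?_⟩
  · have hsum := b.starProjection_eq_sum_rankOne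
    ext x y
    have h1 : P.toEuclideanLin (EuclideanSpace.single y 1) x = P x y := by
      simp [Matrix.toLpLin_apply]
    rw [← h1, hS, ContinuousLinearMap.coe_coe, hsum]
    simp [Matrix.mul_apply, mul_comm, EuclideanSpace.inner_single_right]
  · ext i j
    have h := orthonormal_iff_ite.1 b.orthonormal i j
    rw [Matrix.mul_apply, Matrix.one_apply, ← h, Submodule.coe_inner, PiLp.inner_apply]
    exact Finset.sum_congr rfl fun x _ => mul_comm _ _

/-- The action of a group of orthogonal matrices on the range of a commuting orthogonal projection
`P` of rank at most `m`, as a homomorphism to `O(m)`; the missing dimensions are filled with the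
trivial action. -/
lemma exists_compression {Q : Type*} [Group Q] {n m : ℕ} (ρ : Q →* Matrix.orthogonalGroup (Fin n) ℝ)
    (P : Matrix (Fin n) (Fin n) ℝ) (hs : Pᵀ = P) (hi : P * P = P)
    (hc : ∀ q, (ρ q : Matrix (Fin n) (Fin n) ℝ) * P = P * ρ q) (htr : P.trace ≤ m) :
    ∃ φ : Q →* Matrix.orthogonalGroup (Fin m) ℝ,
      ∀ q, φ q = 1 → (ρ q : Matrix (Fin n) (Fin n) ℝ) * P = P := by
  obtain ⟨k, J₀, hJ₀, hJ₀'⟩ := exists_factor P hs hi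
  have hk : k ≤ m := by
    rw [← hJ₀, Matrix.trace_mul_comm, hJ₀', Matrix.trace_one, Fintype.card_fin] at htr
    exact_mod_cast htr
  -- Zero rows are appended to `J₀` so that it has exactly `m` rows.
  obtain ⟨J, hJ⟩ : ∃ J : Matrix (Fin m) (Fin n) ℝ, Jᵀ * J = P := by
    refine ⟨(1 : Matrix (Fin m) (Fin m) ℝ).submatrix id (Fin.castLE hk) * J₀, ?_⟩
    have hE : ((1 : Matrix (Fin m) (Fin m) ℝ).submatrix id (Fin.castLE hk))ᵀ *
        (1 : Matrix (Fin m) (Fin m) ℝ).submatrix id (Fin.castLE hk) = 1 := by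
      ext i j
      simp [Matrix.mul_apply, Matrix.one_apply]
    rw [Matrix.transpose_mul, Matrix.mul_assoc, ← Matrix.mul_assoc _ _ J₀, hE, Matrix.one_mul, hJ₀]
  have hJP : J * P = J := by
    have : (J * P - J)ᴴ * (J * P - J) = 0 := by
      rw [Matrix.conjTranspose_eq_transpose_of_trivial, Matrix.transpose_sub,
        Matrix.transpose_mul, hs]
      have h1 : (P * Jᵀ - Jᵀ) * (J * P - J) =
          P * (Jᵀ * J) * P - P * (Jᵀ * J) - (Jᵀ * J) * P + Jᵀ * J := by
        simp only [Matrix.mul_sub, Matrix.sub_mul, Matrix.mul_assoc]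
        abel
      rw [h1, hJ, hi, hi]; simp
    exact sub_eq_zero.1 (Matrix.conjTranspose_mul_self_eq_zero.1 this)
  have hPJ : P * Jᵀ = Jᵀ := by
    have := congrArg Matrix.transpose hJP
    rwa [Matrix.transpose_mul, hs] at this
  let f : Q → Matrix (Fin m) (Fin m) ℝ := fun q => J * (ρ q).1 * Jᵀ + (1 - J * Jᵀ)
  have hmul : ∀ q r, f (q * r) = f q * f r := by
    intro q r
    have e1 : J * (ρ q).1 * Jᵀ * (J * (ρ r).1 * Jᵀ) = J * (ρ (q * r)).1 * Jᵀ := by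
      calc _ = J * ((ρ q).1 * (Jᵀ * J)) * (ρ r).1 * Jᵀ := by simp only [Matrix.mul_assoc]
        _ = (J * P) * (ρ q).1 * (ρ r).1 * Jᵀ := by
          rw [hJ, hc]; simp only [Matrix.mul_assoc]
        _ = _ := by rw [hJP, map_mul]; simp [Matrix.mul_assoc]
    have e2 : J * (ρ q).1 * Jᵀ * (J * Jᵀ) = J * (ρ q).1 * Jᵀ := by
      calc _ = J * (ρ q).1 * ((Jᵀ * J) * Jᵀ) := by simp only [Matrix.mul_assoc]
        _ = _ := by rw [hJ, hPJ]
    have e3 : (J * Jᵀ) * (J * (ρ r).1 * Jᵀ) = J * (ρ r).1 * Jᵀ := by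
      calc _ = (J * (Jᵀ * J)) * (ρ r).1 * Jᵀ := by simp only [Matrix.mul_assoc]
        _ = _ := by rw [hJ, hJP]
    have e4 : (J * Jᵀ) * (J * Jᵀ) = J * Jᵀ := by
      calc _ = (J * (Jᵀ * J)) * Jᵀ := by simp only [Matrix.mul_assoc]
        _ = _ := by rw [hJ, hJP]
    simp only [f, Matrix.add_mul, Matrix.mul_add, Matrix.sub_mul, Matrix.mul_sub, Matrix.one_mul,
      Matrix.mul_one, e1, e2, e3, e4]
    abel
  have hone : f 1 = 1 := by simp [f]
  have htrans : ∀ q, (f q)ᵀ = f q⁻¹ := by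
    intro q
    have : (ρ q⁻¹).1 = (ρ q).1ᵀ := by
      rw [map_inv]; rfl
    simp only [f, this, Matrix.transpose_add, Matrix.transpose_sub, Matrix.transpose_mul,
      Matrix.transpose_transpose, Matrix.transpose_one, Matrix.mul_assoc]
  refine ⟨⟨⟨fun q => ⟨f q, ?_⟩, Subtype.ext hone⟩, fun q r => Subtype.ext (hmul q r)⟩, ?_⟩
  · rw [Matrix.mem_orthogonalGroup_iff, htrans, ← hmul, mul_inv_cancel, hone]
  · intro q hq
    have hfq : f q = 1 := congrArg Subtype.val hq
    have h1 : J * (ρ q).1 * Jᵀ = J * Jᵀ := by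
      have : J * (ρ q).1 * Jᵀ + (1 - J * Jᵀ) = 1 := hfq
      rw [← sub_eq_zero] at this ⊢
      rw [← this]; abel
    calc (ρ q).1 * P = P * (ρ q).1 * P := by rw [← hc, Matrix.mul_assoc, hi]
      _ = Jᵀ * (J * (ρ q).1 * Jᵀ) * J := by rw [← hJ]; simp only [Matrix.mul_assoc]
      _ = (Jᵀ * J) * (Jᵀ * J) := by rw [h1]; simp only [Matrix.mul_assoc]
      _ = P := by rw [hJ, hi]

/-- If `X` fixes the range of `1 + A` and commutes with a `G` that cyclically permutes `A`, `B`,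
`AB` by conjugation, then `X` also fixes the ranges of `1 + B` and of `1 + AB`, and these span. -/
lemma eq_one_of_mul_one_add {R : Type*} [Ring R] [Algebra ℝ R] {A B G H X : R}
    (hGH : G * H = 1) (hA : G * A * H = B) (hB : G * B * H = A * B) (hX : X * G = G * X)
    (h : X * (1 + A) = 1 + A) : X = 1 := by
  have conj : ∀ Y, X * Y = Y → X * (G * Y * H) = G * Y * H := by
    intro Y hY
    rw [← mul_assoc, ← mul_assoc, hX, mul_assoc G X Y, hY]
  have hb : X * (1 + B) = 1 + B := by
    have := conj _ h
    rwa [mul_add, add_mul, mul_one, hGH, hA] at this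
  have hab : X * (1 + A * B) = 1 + A * B := by
    have := conj _ hb
    rwa [mul_add, add_mul, mul_one, hGH, hB] at this
  have hprod : X * (1 + A + B + A * B) = 1 + A + B + A * B := by
    have e : (1 + A + B + A * B) = (1 + A) * (1 + B) := by noncomm_ring
    rw [e, ← mul_assoc, h]
  have h2 : (2 : ℝ) • X = (2 : ℝ) • (1 : R) := by
    have e : (2 : ℝ) • X = X * (1 + A) + X * (1 + B) + X * (1 + A * B)
        - X * (1 + A + B + A * B) := by
      rw [two_smul]; noncomm_ring
    rw [e, h, hb, hab, hprod, two_smul]; abel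
  exact smul_right_injective R (two_ne_zero' ℝ) h2

/-- Let `Q` be a finite group in which every nontrivial normal subgroup meets the
commutator subgroup nontrivially, and which does not embed into `O(4)`. Then `Q × A_5`
does not embed into `O(7)`. -/
theorem prod_with_A5_not_subgroup_of_O7 (Q : Type) [Group Q] [Finite Q]
    (hQnormal : ∀ N : Subgroup Q, N.Normal → N ≠ ⊥ → N ⊓ commutator Q ≠ ⊥)
    (hQO4 : ¬ ∃ φ : Q →* Matrix.orthogonalGroup (Fin 4) ℝ, Function.Injective φ) :
    ¬ ∃ ψ : Q × alternatingGroup (Fin 5) →* Matrix.orthogonalGroup (Fin 7) ℝ,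
        Function.Injective ψ := by
  rintro ⟨ψ, hψ⟩
  apply hQO4
  obtain ⟨a, b, g, haa, hbb, hba, hga, hgb, hab⟩ : ∃ a b g : alternatingGroup (Fin 5),
      a * a = 1 ∧ b * b = 1 ∧ b * a = a * b ∧ g * a * g⁻¹ = b ∧ g * b * g⁻¹ = a * b ∧
      a * b ≠ 1 := by
    refine ⟨⟨c[0, 1] * c[2, 3], Equiv.Perm.mem_alternatingGroup.2 (by decide)⟩,
      ⟨c[1, 2] * c[0, 3], Equiv.Perm.mem_alternatingGroup.2 (by decide)⟩,
      ⟨c[0, 1, 2], Equiv.Perm.mem_alternatingGroup.2 (by decide)⟩, ?_, ?_, ?_, ?_, ?_, ?_⟩ <;>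
      decide
  let ρ : Q →* Matrix.orthogonalGroup (Fin 7) ℝ := ψ.comp (MonoidHom.inl _ _)
  let σ : alternatingGroup (Fin 5) →* Matrix (Fin 7) (Fin 7) ℝ :=
    (Matrix.orthogonalGroup (Fin 7) ℝ).subtype.comp (ψ.comp (MonoidHom.inr _ _))
  have hσinj : Function.Injective σ :=
    Subtype.val_injective.comp (hψ.comp fun x y h => (Prod.ext_iff.1 h).2)
  have hρinj : ∀ q, (ρ q : Matrix (Fin 7) (Fin 7) ℝ) = 1 → q = 1 := by
    intro q hq
    have h1 : ψ (q, 1) = ψ 1 := by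
      rw [map_one]; exact Subtype.ext hq
    exact (Prod.ext_iff.1 (hψ h1)).1
  have hcomm : ∀ q x, (ρ q).1 * σ x = σ x * (ρ q).1 := by
    intro q x
    have h : ψ (q, 1) * ψ (1, x) = ψ (1, x) * ψ (q, 1) := by
      rw [← map_mul, ← map_mul]; simp
    exact congrArg Subtype.val h
  have hσT : ∀ x, (σ x)ᵀ = σ x⁻¹ := by
    intro x
    have h : ψ (1, x⁻¹) = (ψ (1, x))⁻¹ := by
      rw [← map_inv]; simp
    exact (congrArg Subtype.val h).symm
  obtain ⟨A, hAdef⟩ : ∃ A, A = σ a := ⟨_, rfl⟩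
  obtain ⟨B, hBdef⟩ : ∃ B, B = σ b := ⟨_, rfl⟩
  obtain ⟨G, hGdef⟩ : ∃ G, G = σ g := ⟨_, rfl⟩
  obtain ⟨H, hHdef⟩ : ∃ H, H = σ g⁻¹ := ⟨_, rfl⟩
  have hAA : A * A = 1 := by rw [hAdef, ← map_mul, haa, map_one]
  have hBB : B * B = 1 := by rw [hBdef, ← map_mul, hbb, map_one]
  have hBA : B * A = A * B := by rw [hAdef, hBdef, ← map_mul, hba, map_mul]
  have hGH : G * H = 1 := by rw [hGdef, hHdef, ← map_mul, mul_inv_cancel, map_one]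
  have hHG : H * G = 1 := by rw [hGdef, hHdef, ← map_mul, inv_mul_cancel, map_one]
  have hGA : G * A * H = B := by
    rw [hGdef, hHdef, hAdef, hBdef, ← map_mul, ← map_mul, hga]
  have hGB : G * B * H = A * B := by
    rw [hGdef, hHdef, hAdef, hBdef, ← map_mul, ← map_mul, hgb, map_mul]
  have hAB1 : A * B ≠ 1 := by
    rw [hAdef, hBdef, ← map_mul, ← map_one σ]; exact fun h => hab (hσinj h)
  have hAT : Aᵀ = A := by rw [hAdef, hσT, inv_eq_of_mul_eq_one_left haa]
  have hBT : Bᵀ = B := by rw [hBdef, hσT, inv_eq_of_mul_eq_one_left hbb]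
  have hqA : ∀ q, (ρ q).1 * A = A * (ρ q).1 := fun q => hAdef ▸ hcomm q a
  have hqB : ∀ q, (ρ q).1 * B = B * (ρ q).1 := fun q => hBdef ▸ hcomm q b
  have hqG : ∀ q, (ρ q).1 * G = G * (ρ q).1 := fun q => hGdef ▸ hcomm q g
  clear_value σ ρ
  clear hAdef hBdef hGdef hHdef
  have htB : B.trace = A.trace := by
    rw [← hGA, Matrix.trace_mul_comm, ← Matrix.mul_assoc, hHG, Matrix.one_mul]
  have htAB : (A * B).trace = A.trace := by
    rw [← hGB, Matrix.trace_mul_comm, ← Matrix.mul_assoc, hHG, Matrix.one_mul, htB]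
  have hABA : A * B * A = B := by rw [Matrix.mul_assoc, hBA, ← Matrix.mul_assoc, hAA, one_mul]
  have hABB : A * B * B = A := by rw [Matrix.mul_assoc, hBB, mul_one]
  have hAAB : A * (A * B) = B := by rw [← Matrix.mul_assoc, hAA, one_mul]
  have hBAB : B * (A * B) = A := by rw [← Matrix.mul_assoc, hBA, hABB]
  have hABAB : A * B * (A * B) = 1 := by rw [← Matrix.mul_assoc, hABA, hBB]
  have hABT : (A * B)ᵀ = A * B := by rw [Matrix.transpose_mul, hAT, hBT, hBA]
  have hqAB : ∀ q, (ρ q).1 * (A * B) = A * B * (ρ q).1 := fun q => by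
    rw [← Matrix.mul_assoc, hqA, Matrix.mul_assoc, hqB, Matrix.mul_assoc]
  -- Projections onto the fixed space of `a` and `b`, onto the space where `a = 1`, `b = -1`, and onto
  -- the sum of these two, the fixed space of `a`.
  obtain ⟨P₀, hP₀⟩ : ∃ P₀, P₀ = (1 / 4 : ℝ) • (1 + A + B + A * B) := ⟨_, rfl⟩
  obtain ⟨P₁, hP₁⟩ : ∃ P₁, P₁ = (1 / 4 : ℝ) • (1 + A - B - A * B) := ⟨_, rfl⟩
  obtain ⟨P₂, hP₂⟩ : ∃ P₂, P₂ = (1 / 2 : ℝ) • (1 + A) := ⟨_, rfl⟩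
  have s₀ : P₀ᵀ = P₀ := by
    simp only [hP₀, Matrix.transpose_smul, Matrix.transpose_add, Matrix.transpose_one, hAT, hBT,
      hABT]
  have s₁ : P₁ᵀ = P₁ := by
    simp only [hP₁, Matrix.transpose_smul, Matrix.transpose_add, Matrix.transpose_sub,
      Matrix.transpose_one, hAT, hBT, hABT]
  have s₂ : P₂ᵀ = P₂ := by simp [hP₂, hAT]
  have i₀ : P₀ * P₀ = P₀ := by
    simp only [hP₀, smul_mul_smul_comm, mul_add, add_mul, one_mul, mul_one, hAA, hBB, hBA, hABA,
      hABB, hAAB, hBAB, hABAB]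
    module
  have i₁ : P₁ * P₁ = P₁ := by
    simp only [hP₁, smul_mul_smul_comm, mul_add, add_mul, mul_sub, sub_mul, one_mul, mul_one, hAA,
      hBB, hBA, hABA, hABB, hAAB, hBAB, hABAB]
    module
  have i₂ : P₂ * P₂ = P₂ := by
    simp only [hP₂, smul_mul_smul_comm, mul_add, add_mul, one_mul, mul_one, hAA]
    module
  have c₀ : ∀ q, (ρ q).1 * P₀ = P₀ * (ρ q).1 := fun q => by
    simp only [hP₀, mul_smul_comm, smul_mul_assoc, mul_add, add_mul, one_mul, mul_one, hqA, hqB,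
      hqAB]
  have c₁ : ∀ q, (ρ q).1 * P₁ = P₁ * (ρ q).1 := fun q => by
    simp only [hP₁, mul_smul_comm, smul_mul_assoc, mul_add, add_mul, mul_sub, sub_mul, one_mul,
      mul_one, hqA, hqB, hqAB]
  have c₂ : ∀ q, (ρ q).1 * P₂ = P₂ * (ρ q).1 := fun q => by
    simp only [hP₂, mul_smul_comm, smul_mul_assoc, mul_add, add_mul, one_mul, mul_one, hqA]
  have t₀ : P₀.trace = (7 + 3 * A.trace) / 4 := by
    simp [hP₀, htB, htAB]; ring
  have t₁ : P₁.trace = (7 - A.trace) / 4 := by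
    simp [hP₁, htB, htAB]; ring
  have t₂ : P₂.trace = (7 + A.trace) / 2 := by
    simp [hP₂]; ring
  -- The kernel of the action of `Q` on the fixed space of `a` is trivial.
  have key : ∀ q, (ρ q).1 * (1 + A) = 1 + A → q = 1 := fun q h =>
    hρinj q (eq_one_of_mul_one_add hGH hGA hGB (hqG q) h)
  obtain ⟨k, J₀, hJ₀, hJ₀'⟩ := exists_factor P₀ s₀ i₀
  obtain ⟨n, J₁, hJ₁, hJ₁'⟩ := exists_factor P₁ s₁ i₁
  have hk : P₀.trace = k := by
    rw [← hJ₀, Matrix.trace_mul_comm, hJ₀', Matrix.trace_one, Fintype.card_fin]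
  have hn : P₁.trace = n := by
    rw [← hJ₁, Matrix.trace_mul_comm, hJ₁', Matrix.trace_one, Fintype.card_fin]
  have hkn : k + 3 * n = 7 := by
    have : (k : ℝ) + 3 * n = 7 := by rw [← hk, ← hn, t₀, t₁]; ring
    exact_mod_cast this
  have hn3 : n < 3 := by omega
  interval_cases n
  · exfalso
    -- `P₁ = 0` and its conjugate under `g` add up to `2 (1 - AB) = 0`.
    have hz : P₁ = 0 := by
      rw [← hJ₁]; ext x y; simp [Matrix.mul_apply]
    have hz1 : 1 + A - B - A * B = 0 := by
      rw [hP₁] at hz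
      exact (smul_eq_zero.1 hz).resolve_left (by norm_num)
    have hGAB : G * (A * B) * H = A := by
      calc G * (A * B) * H = (G * A * H) * (G * B * H) := by
            rw [Matrix.mul_assoc (G * A), ← Matrix.mul_assoc H, ← Matrix.mul_assoc H, hHG]
            simp only [Matrix.mul_assoc, Matrix.one_mul]
        _ = A := by rw [hGA, hGB, hBAB]
    have hz2 : 1 + B - A * B - A = 0 := by
      have : G * (1 + A - B - A * B) * H = 0 := by rw [hz1]; simp
      simpa only [mul_add, add_mul, mul_sub, sub_mul, mul_one, hGH, hGA, hGB, hGAB] using this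
    apply hAB1
    have h2 : (2 : ℝ) • (1 - A * B) = 0 := by
      calc (2 : ℝ) • (1 - A * B) = (1 + A - B - A * B) + (1 + B - A * B - A) := by module
        _ = 0 := by rw [hz1, hz2, add_zero]
    exact (sub_eq_zero.1 ((smul_eq_zero.1 h2).resolve_left two_ne_zero)).symm
  · obtain ⟨φ, hφ⟩ := exists_compression (m := 4) ρ P₀ s₀ i₀ c₀ (by
      rw [hk]; exact_mod_cast (by omega : k ≤ 4))
    obtain ⟨χ, hχ⟩ := exists_compression (m := 1) ρ P₁ s₁ i₁ c₁ (by rw [hn])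
    refine ⟨φ, (MonoidHom.ker_eq_bot_iff φ).1 ?_⟩
    by_contra hne
    apply hQnormal φ.ker inferInstance hne
    rw [eq_bot_iff]
    rintro q ⟨hq₀, hq₁⟩
    have hχq : χ q = 1 := by
      have hle : commutator Q ≤ χ.ker := by
        rw [commutator_def, Subgroup.commutator_le]
        intro x _ y _
        rw [MonoidHom.mem_ker, map_commutatorElement, commutatorElement_eq_one_iff_mul_comm]
        apply Subtype.ext
        ext i j
        fin_cases i; fin_cases j
        simp [Matrix.mul_apply, mul_comm]
      exact hle hq₁
    have e₀ := hφ q hq₀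
    have e₁ := hχ q hχq
    have hsum : 1 + A = (2 : ℝ) • (P₀ + P₁) := by rw [hP₀, hP₁]; module
    rw [Subgroup.mem_bot]
    apply key
    rw [hsum, mul_smul_comm, mul_add, e₀, e₁]
  · have hA : A.trace = -1 := by
      rw [hn] at t₁; push_cast at t₁; linarith
    obtain ⟨φ, hφ⟩ := exists_compression (m := 4) ρ P₂ s₂ i₂ c₂ (by
      rw [t₂, hA]; norm_num)
    refine ⟨φ, (injective_iff_map_eq_one φ).2 fun q hq => key q ?_⟩
    have e := hφ q hq
    have hsum : 1 + A = (2 : ℝ) • P₂ := by rw [hP₂]; module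
    rw [hsum, mul_smul_comm, e]
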